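/- arXiv:1412.4137 — 2 statements merged into one kernel-verified Lean document; each statement's English description precedes it below -/
import Mathlib

section
/- In G the following three identities hold: j⁴a₁j⁻⁴ = a₃a₂⁻³a₃³a₁, j⁴a₂j⁻⁴ = a₃⁻¹, and j⁴a₃j⁻⁴ = a₁⁻¹a₂⁻¹a₁a₂²a₁⁻¹a₂⁻¹a₁a₃⁻¹a₁⁻¹a₂a₁. -/
/-!
Modulo the other relations, `(buv)³ = 1` is the braid relation `bub = ubu` and `(buvu)²v = 1` is
`bjb = vj⁻¹`; thus `G` is a quotient of the Artin group with `(uv)² = (vu)²`, `bub = ubu` and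
`vb = bv`. The element `j` is central in `K = ⟨u, v⟩` and has order dividing `12`, so words in `K`
have an easily computed normal form.

Write `φ` for conjugation by `j⁴`, `q = a₂`, `p = a₂a₁` and `c = a₁⁻¹a₂a₁ = p⁻¹qp`. Since
`φ(q) = a₃⁻¹`, the first and third identities become `φ(q)³q³φ(p) = a₁` and `φ(q)cφ²(q) = cq⁻²c`.
Now `p`, `c` and `q³` are short: `b` occurs once in `p` and twice in `c`, and, since `q` is
conjugate to `ubj⁻¹`, only twice in `q³`. Hence few applications of the relations involving `b`
suffice.
-/

/-- Generators of the Cartwright–Steger lattice presentation. -/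
inductive CSgen : Type
  | u : CSgen
  | v : CSgen
  | b : CSgen

open FreeGroup in
/-- Relators of the Cartwright–Steger lattice:
`u³ = v⁴ = b³ = 1`, `(uv)² = (vu)²`, `vb = bv`, `(buv)³ = 1`, `(buvu)²v = 1`. -/
def csRels : Set (FreeGroup CSgen) :=
  { (of CSgen.u) ^ 3,
    (of CSgen.v) ^ 4,
    (of CSgen.b) ^ 3,
    (of CSgen.u * of CSgen.v) ^ 2 * ((of CSgen.v * of CSgen.u) ^ 2)⁻¹,
    of CSgen.v * of CSgen.b * (of CSgen.b * of CSgen.v)⁻¹,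
    (of CSgen.b * of CSgen.u * of CSgen.v) ^ 3,
    (of CSgen.b * of CSgen.u * of CSgen.v * of CSgen.u) ^ 2 * of CSgen.v }

/-- The Cartwright–Steger lattice, as an abstract presented group. -/
abbrev CS : Type := PresentedGroup csRels

def gu : CS := PresentedGroup.of CSgen.u
def gv : CS := PresentedGroup.of CSgen.v
def gb : CS := PresentedGroup.of CSgen.b
/-- `j = (uv)²`. -/
def gj : CS := (gu * gv) ^ 2

/-- `a₁ = vuv⁻¹j⁴buvj²`. -/
def a1 : CS := gv * gu * gv⁻¹ * gj ^ 4 * gb * gu * gv * gj ^ 2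
/-- `a₂ = v²ubuv⁻¹uv²j`. -/
def a2 : CS := gv ^ 2 * gu * gb * gu * gv⁻¹ * gu * gv ^ 2 * gj
/-- `a₃ = u⁻¹v²uj⁹bv⁻¹uv⁻¹j⁸`. -/
def a3 : CS := gu⁻¹ * gv ^ 2 * gu * gj ^ 9 * gb * gv⁻¹ * gu * gv⁻¹ * gj ^ 8

/-- The subgroup `Π` generated by `a₁`, `a₂`, `a₃`. -/
def PiGrp : Subgroup CS := Subgroup.closure {a1, a2, a3}

lemma a1_mem : a1 ∈ PiGrp := Subgroup.subset_closure (Set.mem_insert _ _)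
lemma a2_mem : a2 ∈ PiGrp :=
  Subgroup.subset_closure (Set.mem_insert_of_mem _ (Set.mem_insert _ _))
lemma a3_mem : a3 ∈ PiGrp :=
  Subgroup.subset_closure (Set.mem_insert_of_mem _ (Set.mem_insert_of_mem _ (Set.mem_singleton _)))

/-! ### The defining relations -/

lemma gu_pow_three : gu ^ 3 = 1 :=
  PresentedGroup.one_of_mem (rels := csRels) (x := FreeGroup.of CSgen.u ^ 3) (by simp [csRels])

lemma gv_pow_four : gv ^ 4 = 1 :=
  PresentedGroup.one_of_mem (rels := csRels) (x := FreeGroup.of CSgen.v ^ 4) (by simp [csRels])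

lemma gb_pow_three : gb ^ 3 = 1 :=
  PresentedGroup.one_of_mem (rels := csRels) (x := FreeGroup.of CSgen.b ^ 3) (by simp [csRels])

lemma gj_eq_gv_mul_gu_sq : gj = (gv * gu) ^ 2 :=
  mul_inv_eq_one.1 <| PresentedGroup.one_of_mem (rels := csRels)
    (x := (FreeGroup.of CSgen.u * FreeGroup.of CSgen.v) ^ 2 *
      ((FreeGroup.of CSgen.v * FreeGroup.of CSgen.u) ^ 2)⁻¹) (by simp [csRels])

lemma commute_gv_gb : Commute gv gb :=
  mul_inv_eq_one.1 <| PresentedGroup.one_of_mem (rels := csRels)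
    (x := FreeGroup.of CSgen.v * FreeGroup.of CSgen.b *
      (FreeGroup.of CSgen.b * FreeGroup.of CSgen.v)⁻¹) (by simp [csRels])

lemma gb_mul_gu_mul_gv_pow_three : (gb * gu * gv) ^ 3 = 1 :=
  PresentedGroup.one_of_mem (rels := csRels)
    (x := (FreeGroup.of CSgen.b * FreeGroup.of CSgen.u * FreeGroup.of CSgen.v) ^ 3)
    (by simp [csRels])

lemma gb_mul_gu_mul_gv_mul_gu_sq_mul_gv : (gb * gu * gv * gu) ^ 2 * gv = 1 :=
  PresentedGroup.one_of_mem (rels := csRels)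
    (x := (FreeGroup.of CSgen.b * FreeGroup.of CSgen.u * FreeGroup.of CSgen.v *
      FreeGroup.of CSgen.u) ^ 2 * FreeGroup.of CSgen.v)
    (by simp [csRels])

/-! ### The finite subgroup generated by `u` and `v` -/

lemma pow_eq_one_of_conj_eq_mul_inv {G : Type*} [Group G] {g x z : G} {n : ℕ}
    (hzx : Commute z x) (hx : x ^ n = 1) (h : g * x * g⁻¹ = z * x⁻¹) : z ^ n = 1 := by
  have hpow : g * x ^ n * g⁻¹ = z ^ n * (x ^ n)⁻¹ := by
    rw [← conj_pow, h, hzx.inv_right.mul_pow, inv_pow]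
  simpa [hx] using hpow.symm

section Words

/-- Right-associated multiplication, so that words in the generators need no parentheses. -/
local notation:70 g:71 "⬝" h:70 => g * h

/- The relations between words carry a tail `x`, which makes them applicable in the interior of a
right-associated word. -/
variable (x : CS)

lemma gu_gu_gu : gu ⬝ gu ⬝ gu ⬝ x = x := by
  simpa only [pow_succ, pow_zero, one_mul, mul_assoc] using congrArg (· * x) gu_pow_three

lemma gv_gv_gv_gv : gv ⬝ gv ⬝ gv ⬝ gv ⬝ x = x := by
  simpa only [pow_succ, pow_zero, one_mul, mul_assoc] using congrArg (· * x) gv_pow_four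

lemma gu_gv_gu_gv : gu ⬝ gv ⬝ gu ⬝ gv ⬝ x = gj ⬝ x := by
  simp only [gj, pow_two, mul_assoc]

lemma gv_gu_gv_gu : gv ⬝ gu ⬝ gv ⬝ gu ⬝ x = gj ⬝ x := by
  simp only [gj_eq_gv_mul_gu_sq, pow_two, mul_assoc]

lemma gj_gv : gj ⬝ gv ⬝ x = gv ⬝ gj ⬝ x := by
  rw [← gv_gu_gv_gu, ← gu_gv_gu_gv]

lemma gu_gj : gu ⬝ gj ⬝ x = gj ⬝ gu ⬝ x := by
  rw [← gv_gu_gv_gu, ← gu_gv_gu_gv]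

lemma commute_gj_gv : Commute gj gv := by
  change gj * gv = gv * gj
  simpa only [mul_one] using gj_gv 1

lemma gu_gv_gj : gu ⬝ gv ⬝ gj ⬝ x = gj ⬝ gu ⬝ gv ⬝ x := by
  rw [← gj_gv, gu_gj]

lemma gu_gv_gv_gj : gu ⬝ gv ⬝ gv ⬝ gj ⬝ x = gj ⬝ gu ⬝ gv ⬝ gv ⬝ x := by
  rw [← gj_gv, gu_gv_gj]

lemma gu_gv_gv_gv_gj : gu ⬝ gv ⬝ gv ⬝ gv ⬝ gj ⬝ x = gj ⬝ gu ⬝ gv ⬝ gv ⬝ gv ⬝ x := by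
  rw [← gj_gv, gu_gv_gv_gj]

lemma gv_inv : gv⁻¹ = gv ^ 3 :=
  inv_eq_of_mul_eq_one_right (by rw [← pow_succ', gv_pow_four])

lemma gu_gv_gu : gu ⬝ gv ⬝ gu ⬝ x = gv⁻¹ ⬝ gj ⬝ x := by
  rw [eq_inv_mul_iff_mul_eq, gv_gu_gv_gu]

lemma gv_gu_gv : gv ⬝ gu ⬝ gv ⬝ x = gu⁻¹ ⬝ gj ⬝ x := by
  rw [eq_inv_mul_iff_mul_eq, gu_gv_gu_gv]

lemma gu_gu : gu ⬝ gu ⬝ x = gu⁻¹ ⬝ x := by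
  rw [eq_inv_mul_iff_mul_eq, gu_gu_gu]

/-- This is the square of `vuv = u⁻¹j`. -/
lemma gu_gv_gv_gu : gu ⬝ gv ⬝ gv ⬝ gu ⬝ x = gv⁻¹ ⬝ gj ⬝ gj ⬝ gu ⬝ gv⁻¹ ⬝ x := by
  rw [eq_inv_mul_iff_mul_eq]
  calc gv ⬝ gu ⬝ gv ⬝ gv ⬝ gu ⬝ x
      = gv ⬝ gu ⬝ gv ⬝ gv ⬝ gu ⬝ gv ⬝ gv⁻¹ ⬝ x := by rw [mul_inv_cancel_left]
    _ = gu⁻¹ ⬝ gj ⬝ gu⁻¹ ⬝ gj ⬝ gv⁻¹ ⬝ x := by rw [gv_gu_gv, gv_gu_gv]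
    _ = gj ⬝ gj ⬝ gu ⬝ gv⁻¹ ⬝ x := by rw [← gu_gu, ← gu_gu]; simp only [gu_gj, gu_gu_gu]

lemma gu_gv_gv_gv_gu_gv :
    gu ⬝ gv ⬝ gv ⬝ gv ⬝ gu ⬝ gv ⬝ x = gv⁻¹ ⬝ gj ⬝ gj ⬝ gj ⬝ gu ⬝ gv ⬝ gv ⬝ gv ⬝ gu ⬝ x := by
  have gu_gv : gu ⬝ gv ⬝ x = gv⁻¹ ⬝ gj ⬝ gu ⬝ gu ⬝ x := by
    rw [eq_inv_mul_iff_mul_eq, gv_gu_gv, gu_gu, ← gu_gu, ← gu_gu, gu_gj, gu_gj]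
  rw [gu_gv, gv_inv]
  simp only [pow_succ, pow_zero, one_mul, mul_assoc, gv_gv_gv_gv]
  rw [gu_gv_gv_gj, gu_gv_gv_gu, gv_inv]
  simp only [pow_succ, pow_zero, one_mul, mul_assoc, gj_gv]

/-- As `uv⁻¹u` conjugates `v` to `j³v⁻¹` with `j` and `v` commuting, `v⁴ = 1` gives `j¹² = 1`. -/
lemma gj_pow_twelve : gj ^ 12 = 1 := by
  have hconj : (gu * gv⁻¹ * gu) * gv * (gu * gv⁻¹ * gu)⁻¹ = gj ^ 3 * gv⁻¹ := by
    rw [mul_inv_eq_iff_eq_mul]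
    have := gu_gv_gv_gv_gu_gv 1
    simp only [gv_inv, pow_succ, pow_zero, one_mul, mul_one, mul_assoc, gj_gv] at this ⊢
    exact this
  simpa only [← pow_mul] using
    pow_eq_one_of_conj_eq_mul_inv (commute_gj_gv.pow_left 3) gv_pow_four hconj

lemma gj_inv : gj⁻¹ = gj ^ 11 :=
  inv_eq_of_mul_eq_one_right (by rw [← pow_succ', gj_pow_twelve])

lemma commute_gu_gj : Commute gu gj := by
  change gu * gj = gj * gu
  simpa only [mul_one] using gu_gj 1

lemma gu_inv : gu⁻¹ = gj⁻¹ ⬝ gv ⬝ gu ⬝ gv := by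
  rw [eq_inv_mul_iff_mul_eq, ← commute_gu_gj.inv_left.eq]
  simpa only [mul_one] using (gv_gu_gv 1).symm

lemma gj_twelve : gj ⬝ gj ⬝ gj ⬝ gj ⬝ gj ⬝ gj ⬝ gj ⬝ gj ⬝ gj ⬝ gj ⬝ gj ⬝ gj ⬝ x = x := by
  simpa only [pow_succ, pow_zero, one_mul, mul_assoc] using congrArg (· * x) gj_pow_twelve

lemma gb_gv : gb ⬝ gv ⬝ x = gv ⬝ gb ⬝ x := by
  rw [← mul_assoc, ← commute_gv_gb.eq, mul_assoc]

/- Modulo the following rules, every element of `⟨u, v⟩` has a normal form `vᵃ jⁱ t` with `t` one of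
`1, u, uv, uv², uv³, uv³u`, and powers of `v` move to the left across `b`. -/
attribute [local simp] mul_assoc pow_succ gv_inv gj_inv gu_inv gv_gv_gv_gv gj_twelve
  gj_gv gu_gj gu_gv_gj gu_gv_gv_gj gu_gv_gv_gv_gj gu_gu gu_gv_gu gu_gv_gv_gu gu_gv_gv_gv_gu_gv gb_gv

/-! ### Relations involving `b` -/

lemma gb_gj_gb : gb ⬝ gj ⬝ gb ⬝ x = gv ⬝ gj⁻¹ ⬝ x := by
  calc gb ⬝ gj ⬝ gb ⬝ x
      = gv ⬝ ((gb * gu * gv * gu) ^ 2 * gv) ⬝ gj⁻¹ ⬝ x := by simp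
    _ = gv ⬝ gj⁻¹ ⬝ x := by rw [gb_mul_gu_mul_gv_mul_gu_sq_mul_gv, one_mul]

lemma gb_inv : gb⁻¹ = gv⁻¹ ⬝ gj ⬝ gb ⬝ gj := by
  refine inv_eq_of_mul_eq_one_right ?_
  have h := gb_gj_gb gj
  rw [inv_mul_cancel, mul_one] at h
  rw [← mul_assoc, ← commute_gv_gb.inv_left.eq, mul_assoc, h, inv_mul_cancel]

/-- This is `(buv)³ = 1`. -/
lemma gb_gu_gb : gb ⬝ gu ⬝ gb ⬝ x = gu ⬝ gb ⬝ gu ⬝ x := by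
  calc gb ⬝ gu ⬝ gb ⬝ x
      = (gb * gu * gv) ^ 3 ⬝ gv⁻¹ ⬝ gu⁻¹ ⬝ gb⁻¹ ⬝ gu ⬝ gj⁻¹ ⬝ x := by simp
    _ = gu ⬝ gb ⬝ gu ⬝ x := by
      rw [gb_mul_gu_mul_gv_pow_three]
      simp [gb_inv]

lemma gb_gb : gb ⬝ gb ⬝ x = gb⁻¹ ⬝ x := by
  rw [eq_inv_mul_iff_mul_eq]
  simpa only [pow_succ, pow_zero, one_mul, mul_assoc] using congrArg (· * x) gb_pow_three

lemma gb_inv_gu_inv_gb_inv : gb⁻¹ ⬝ gu⁻¹ ⬝ gb⁻¹ ⬝ x = gu⁻¹ ⬝ gb⁻¹ ⬝ gu⁻¹ ⬝ x := by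
  simpa only [mul_inv_rev, mul_one, mul_assoc] using congrArg (·⁻¹ * x) (gb_gu_gb 1)

lemma gb_gj_gu_gb : gb ⬝ gj ⬝ gu ⬝ gb ⬝ x = gj⁻¹ ⬝ gv ⬝ gu ⬝ gb ⬝ gu⁻¹ ⬝ x := by
  calc gb ⬝ gj ⬝ gu ⬝ gb ⬝ x
      = gj⁻¹ ⬝ gb⁻¹ ⬝ gu⁻¹ ⬝ gb⁻¹ ⬝ gj⁻¹ ⬝ x := by simp [gb_inv]
    _ = gj⁻¹ ⬝ gu⁻¹ ⬝ gb⁻¹ ⬝ gu⁻¹ ⬝ gj⁻¹ ⬝ x := by rw [gb_inv_gu_inv_gb_inv]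
    _ = gj⁻¹ ⬝ gv ⬝ gu ⬝ gb ⬝ gu⁻¹ ⬝ x := by simp [gb_inv]

lemma gb_gj_inv_gb : gb ⬝ gj⁻¹ ⬝ gb ⬝ x = gv ⬝ gj ⬝ gb ⬝ gj ^ 3 ⬝ gb ⬝ gj ⬝ x := by
  calc gb ⬝ gj⁻¹ ⬝ gb ⬝ x
      = gv⁻¹ ⬝ gb ⬝ gb ⬝ gj ⬝ gb ⬝ gb ⬝ x := by simp [gb_gj_gb]
    _ = gv ⬝ gj ⬝ gb ⬝ gj ^ 3 ⬝ gb ⬝ gj ⬝ x := by simp [gb_gb, gb_inv]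

lemma gb_gj_inv_gu_gb_gj_inv_gb : gb ⬝ gj⁻¹ ⬝ gu ⬝ gb ⬝ gj⁻¹ ⬝ gb ⬝ x =
    gu ⬝ gb ⬝ gj ^ 3 ⬝ gu ⬝ gb ⬝ gv ⬝ gj ⬝ x := by
  calc gb ⬝ gj⁻¹ ⬝ gu ⬝ gb ⬝ gj⁻¹ ⬝ gb ⬝ x
      = gb ⬝ gu ⬝ gb ⬝ gv ⬝ gj ^ 3 ⬝ gb ⬝ gj ⬝ x := by
        rw [gb_gj_inv_gb]
        simp
    _ = gu ⬝ gb ⬝ gj ^ 3 ⬝ gu ⬝ gb ⬝ gv ⬝ gj ⬝ x := by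
      rw [gb_gu_gb]
      simp

lemma gb_gj_inv_gu_gb_gj_inv_gb_gj_inv_gu_gb :
    gb ⬝ gj⁻¹ ⬝ gu ⬝ gb ⬝ gj⁻¹ ⬝ gb ⬝ gj⁻¹ ⬝ gu ⬝ gb ⬝ x =
      gu ⬝ gb ⬝ gj ^ 4 ⬝ gb ⬝ gv⁻¹ ⬝ gu ⬝ x := by
  calc gb ⬝ gj⁻¹ ⬝ gu ⬝ gb ⬝ gj⁻¹ ⬝ gb ⬝ gj⁻¹ ⬝ gu ⬝ gb ⬝ x
      = gu ⬝ gb ⬝ gj ^ 3 ⬝ gu ⬝ gv ⬝ gb ⬝ gu ⬝ gb ⬝ x := by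
        rw [gb_gj_inv_gu_gb_gj_inv_gb]
        simp
    _ = gu ⬝ gb ⬝ gj ^ 4 ⬝ gb ⬝ gv⁻¹ ⬝ gu ⬝ x := by
      rw [gb_gu_gb]
      simp

lemma gb_gj_inv_gb_gu_gv_gb_gj_inv_gb_gu_gb :
    gb ⬝ gj⁻¹ ⬝ gb ⬝ gu ⬝ gv ⬝ gb ⬝ gj⁻¹ ⬝ gb ⬝ gu ⬝ gb ⬝ x =
      gu ⬝ gb ⬝ gv⁻¹ ⬝ gj ^ 3 ⬝ gu ⬝ gv⁻¹ ⬝ x := by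
  calc gb ⬝ gj⁻¹ ⬝ gb ⬝ gu ⬝ gv ⬝ gb ⬝ gj⁻¹ ⬝ gb ⬝ gu ⬝ gb ⬝ x
      = gb ⬝ gj⁻¹ ⬝ gb ⬝ gu ⬝ gb ⬝ gv ⬝ gj⁻¹ ⬝ gb ⬝ gu ⬝ gb ⬝ x := by simp
    _ = gb ⬝ gj⁻¹ ⬝ gu ⬝ gv⁻¹ ⬝ gb ⬝ gb ⬝ gu ⬝ x := by
      rw [gb_gu_gb, gb_gu_gb]
      simp
    _ = gb ⬝ gu ⬝ gb ⬝ gv ^ 2 ⬝ gj ⬝ gu ⬝ x := by simp [gb_gb, gb_inv]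
    _ = gu ⬝ gb ⬝ gv⁻¹ ⬝ gj ^ 3 ⬝ gu ⬝ gv⁻¹ ⬝ x := by
      rw [gb_gu_gb]
      simp

lemma gb_gj_inv_sq_gu_gb : gb ⬝ gj⁻¹ ^ 2 ⬝ gu ⬝ gb ⬝ x =
    gv⁻¹ ⬝ gu ⬝ gb ⬝ gj ⬝ gu ⬝ gv⁻¹ ⬝ gu ⬝ gb ⬝ gu ⬝ gv⁻¹ ⬝ x := by
  calc gb ⬝ gj⁻¹ ^ 2 ⬝ gu ⬝ gb ⬝ x
      = gv⁻¹ ⬝ gu ⬝ gj⁻¹ ⬝ gv ⬝ gu ⬝ gb ⬝ gu⁻¹ ⬝ gv⁻¹ ⬝ gu ⬝ gb ⬝ gv⁻¹ ⬝ x := by simp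
    _ = gv⁻¹ ⬝ gu ⬝ gb ⬝ gj ⬝ gu ⬝ gb ⬝ gv⁻¹ ⬝ gu ⬝ gb ⬝ gv⁻¹ ⬝ x := by rw [gb_gj_gu_gb]
    _ = gv⁻¹ ⬝ gu ⬝ gb ⬝ gj ⬝ gu ⬝ gv⁻¹ ⬝ gb ⬝ gu ⬝ gb ⬝ gv⁻¹ ⬝ x := by simp
    _ = gv⁻¹ ⬝ gu ⬝ gb ⬝ gj ⬝ gu ⬝ gv⁻¹ ⬝ gu ⬝ gb ⬝ gu ⬝ gv⁻¹ ⬝ x := by rw [gb_gu_gb]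

lemma gb_gj_inv_sq_gu_gb_gj_pow_three_gu_inv_gb :
    gb ⬝ gj⁻¹ ^ 2 ⬝ gu ⬝ gb ⬝ gj ^ 3 ⬝ gu⁻¹ ⬝ gb ⬝ x =
      gv⁻¹ ⬝ gu ⬝ gb ⬝ gu ⬝ gv⁻¹ ⬝ gu ⬝ gv ^ 2 ⬝ gu ⬝ gb ⬝ gu⁻¹ ⬝ gv ^ 2 ⬝ x := by
  calc gb ⬝ gj⁻¹ ^ 2 ⬝ gu ⬝ gb ⬝ gj ^ 3 ⬝ gu⁻¹ ⬝ gb ⬝ x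
      = gv⁻¹ ⬝ gu ⬝ gb ⬝ gj ⬝ gu ⬝ gv⁻¹ ⬝ gu ⬝ gv ⬝ gb ⬝ gj ⬝ gu ⬝ gb ⬝ gv ^ 2 ⬝ x := by
        rw [gb_gj_inv_sq_gu_gb]
        simp
    _ = gv⁻¹ ⬝ gu ⬝ gb ⬝ gu ⬝ gv⁻¹ ⬝ gu ⬝ gv ^ 2 ⬝ gu ⬝ gb ⬝ gu⁻¹ ⬝ gv ^ 2 ⬝ x := by
      rw [gb_gj_gu_gb]
      simp

/-! ### The elements `a₁`, `a₂`, `a₃` -/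

/-- As `v⁻² = v²`, the right-hand side exhibits `a₂` as a conjugate of `ubj⁻¹`. -/
lemma a2_mul : a2 ⬝ x = gv ^ 2 ⬝ gu⁻¹ ⬝ gb ⬝ gu ⬝ gb ⬝ gj⁻¹ ⬝ gb⁻¹ ⬝ gu ⬝ gv ^ 2 ⬝ x := by
  calc a2 ⬝ x
      = gv ^ 2 ⬝ gu ⬝ gb ⬝ gu ⬝ gv⁻¹ ⬝ gj ⬝ gu ⬝ gv ^ 2 ⬝ x := by simp [a2]
    _ = gv ^ 2 ⬝ gb ⬝ gu ⬝ gb ⬝ gv⁻¹ ⬝ gj ⬝ gu ⬝ gv ^ 2 ⬝ x := by rw [gb_gu_gb]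
    _ = gv ^ 2 ⬝ gu⁻¹ ⬝ gu ⬝ gb ⬝ gu ⬝ gj⁻¹ ⬝ gb⁻¹ ⬝ gu ⬝ gv ^ 2 ⬝ x := by simp [gb_inv]
    _ = gv ^ 2 ⬝ gu⁻¹ ⬝ gb ⬝ gu ⬝ gb ⬝ gj⁻¹ ⬝ gb⁻¹ ⬝ gu ⬝ gv ^ 2 ⬝ x := by rw [gb_gu_gb]

lemma a2_pow_three_mul : a2 ^ 3 ⬝ x = gv ⬝ gb ⬝ gj⁻¹ ⬝ gb ⬝ gj ^ 4 ⬝ gu ⬝ gv ⬝ x := by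
  calc a2 ^ 3 ⬝ x
      = gv ^ 2 ⬝ gu⁻¹ ⬝ gb ⬝ gu ⬝ gb ⬝ gj⁻¹ ⬝ gu ⬝ gb ⬝ gj⁻¹ ⬝ gu ⬝ gb ⬝ gj⁻¹ ⬝ gb⁻¹ ⬝ gu ⬝
          gv ^ 2 ⬝ x := by simp [a2_mul]
    _ = gv ^ 2 ⬝ gb ⬝ gj⁻¹ ⬝ gu⁻¹ ⬝ gb ⬝ gj⁻¹ ⬝ gu ⬝ gv⁻¹ ⬝ gb ⬝ gb ⬝ gj ⬝ gu ⬝ gv ^ 2 ⬝ x := by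
      simp [gb_gu_gb, gb_inv]
    _ = gv ^ 2 ⬝ gb ⬝ gj⁻¹ ⬝ gu⁻¹ ⬝ gb ⬝ gu ⬝ gb ⬝ gv ^ 2 ⬝ gj ^ 2 ⬝ gu ⬝ gv ^ 2 ⬝ x := by
      simp [gb_gb, gb_inv]
    _ = gv ⬝ gb ⬝ gj⁻¹ ⬝ gb ⬝ gj ^ 4 ⬝ gu ⬝ gv ⬝ x := by
      rw [gb_gu_gb]
      simp

lemma a2_pow_three_inv_mul : (a2 ^ 3)⁻¹ ⬝ x =
    gv⁻¹ ⬝ gu⁻¹ ⬝ gj⁻¹ ^ 4 ⬝ gb⁻¹ ⬝ gj ⬝ gb⁻¹ ⬝ gv⁻¹ ⬝ x := by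
  rw [inv_mul_eq_iff_eq_mul, a2_pow_three_mul]
  simp

lemma a2_sq_inv_mul : (a2 ^ 2)⁻¹ ⬝ x =
    gv ^ 2 ⬝ gj⁻¹ ⬝ gu⁻¹ ⬝ gb ⬝ gu⁻¹ ⬝ gv ⬝ gj ^ 3 ⬝ gb ⬝ gj ⬝ gv⁻¹ ⬝ x := by
  calc (a2 ^ 2)⁻¹ ⬝ x
      = a2 ⬝ (a2 ^ 3)⁻¹ ⬝ x := by group
    _ = gv ^ 2 ⬝ gu ⬝ gv⁻¹ ⬝ gb ⬝ gj ⬝ gu ⬝ gb ⬝ gv ⬝ gj ^ 3 ⬝ gb ⬝ gj ⬝ gv⁻¹ ⬝ x := by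
      rw [a2_pow_three_inv_mul]
      simp [a2, gb_inv]
    _ = gv ^ 2 ⬝ gj⁻¹ ⬝ gu⁻¹ ⬝ gb ⬝ gu⁻¹ ⬝ gv ⬝ gj ^ 3 ⬝ gb ⬝ gj ⬝ gv⁻¹ ⬝ x := by
      rw [gb_gj_gu_gb]
      simp

lemma a2_mul_a1_mul : a2 ⬝ a1 ⬝ x = gv ⬝ gj ^ 2 ⬝ gu ⬝ gb ⬝ gv⁻¹ ⬝ gj ^ 3 ⬝ x := by
  calc a2 ⬝ a1 ⬝ x
      = gv ^ 2 ⬝ gu ⬝ gv ^ 2 ⬝ gb ⬝ gu ⬝ gb ⬝ gv ⬝ gu ⬝ gv ⬝ gj ^ 2 ⬝ x := by simp [a1, a2]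
    _ = gv ⬝ gj ^ 2 ⬝ gu ⬝ gb ⬝ gv⁻¹ ⬝ gj ^ 3 ⬝ x := by
      rw [gb_gu_gb]
      simp

lemma a1_inv_mul_a2_mul_a1 :
    a1⁻¹ * a2 * a1 = gj⁻¹ ^ 2 ⬝ gu ⬝ gb ⬝ gj⁻¹ ⬝ gb ⬝ gj ^ 3 := by
  refine eq_of_smul_eq_smul fun x : CS ↦ ?_
  simp only [smul_eq_mul, mul_assoc]
  rw [inv_mul_eq_iff_eq_mul, a2_mul_a1_mul]
  simp [a1, gb_gj_gb]

lemma a1_inv_mul_a2_mul_a1_mul_a2_sq_inv_mul :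
    (a1⁻¹ * a2 * a1) ⬝ (a2 ^ 2)⁻¹ ⬝ (a1⁻¹ * a2 * a1) ⬝ x =
      gj⁻¹ ^ 2 ⬝ gu ⬝ gb ⬝ gj⁻¹ ^ 2 ⬝ gu ⬝ gb ⬝ gu⁻¹ ⬝ gv ⬝ gu⁻¹ ⬝ gj ^ 3 ⬝ gb ⬝ gj⁻¹ ⬝ gu ⬝ gb ⬝
        gj⁻¹ ⬝ gb ⬝ gj ^ 3 ⬝ x := by
  calc (a1⁻¹ * a2 * a1) ⬝ (a2 ^ 2)⁻¹ ⬝ (a1⁻¹ * a2 * a1) ⬝ x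
      = gj⁻¹ ^ 2 ⬝ gu ⬝ gb ⬝ gj⁻¹ ⬝ gv⁻¹ ⬝ gb ⬝ gj ⬝ gu ⬝ gb ⬝ gv ⬝ gu⁻¹ ⬝ gv ⬝ gj ^ 3 ⬝ gb ⬝ gj⁻¹ ⬝
          gv⁻¹ ⬝ gu ⬝ gb ⬝ gj⁻¹ ⬝ gb ⬝ gj ^ 3 ⬝ x := by
        rw [a1_inv_mul_a2_mul_a1, a2_sq_inv_mul]
        simp
    _ = gj⁻¹ ^ 2 ⬝ gu ⬝ gb ⬝ gj⁻¹ ^ 2 ⬝ gu ⬝ gb ⬝ gu⁻¹ ⬝ gv ⬝ gu⁻¹ ⬝ gj ^ 3 ⬝ gb ⬝ gj⁻¹ ⬝ gu ⬝ gb ⬝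
          gj⁻¹ ⬝ gb ⬝ gj ^ 3 ⬝ x := by
      rw [gb_gj_gu_gb]
      simp

lemma conj_a2_eq_a3_inv : gj ^ 4 * a2 * (gj ^ 4)⁻¹ = a3⁻¹ := by
  rw [eq_inv_iff_mul_eq_one]
  exact eq_of_smul_eq_smul fun x : CS ↦ by simp [a2, a3, gb_gj_gb]

lemma conj_a2_pow_three_mul_a2_pow_three_mul_conj_a2_mul_a1 :
    gj ^ 4 * a2 ^ 3 * (gj ^ 4)⁻¹ * a2 ^ 3 * (gj ^ 4 * (a2 * a1) * (gj ^ 4)⁻¹) = a1 :=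
  eq_of_smul_eq_smul fun x : CS ↦ calc
    _ = gv ⬝ gj ^ 4 ⬝ gb ⬝ gj⁻¹ ⬝ gb ⬝ gu ⬝ gv ⬝ gb ⬝ gj⁻¹ ⬝ gb ⬝ gu ⬝ gb ⬝ gv ^ 2 ⬝ gj⁻¹ ⬝ x := by
      simp only [smul_eq_mul, mul_assoc, a2_mul_a1_mul, a2_pow_three_mul]
      simp
    _ = a1 ⬝ x := by
      rw [gb_gj_inv_gb_gu_gv_gb_gj_inv_gb_gu_gb]
      simp [a1]

lemma conj_a2_mul_mul_conj_a2 :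
    gj ^ 4 * a2 * (gj ^ 4)⁻¹ * (a1⁻¹ * a2 * a1) * (gj ^ 8 * a2 * (gj ^ 8)⁻¹) =
      a1⁻¹ * a2 * a1 * (a2 ^ 2)⁻¹ * (a1⁻¹ * a2 * a1) := by
  refine eq_of_smul_eq_smul fun x : CS ↦ ?_
  calc _
    _ = gv ^ 2 ⬝ gj ^ 4 ⬝ gu ⬝ gv⁻¹ ⬝ gb ⬝ gj⁻¹ ⬝ gu ⬝ gb ⬝ gj⁻¹ ⬝ gb ⬝ gj⁻¹ ⬝ gu ⬝ gb ⬝ gj ^ 5 ⬝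
          gu ⬝ gv⁻¹ ⬝ gu ⬝ gv ^ 2 ⬝ x := by
      rw [a1_inv_mul_a2_mul_a1]
      simp [a2]
    _ = gj⁻¹ ^ 2 ⬝ gu ⬝ gv⁻¹ ⬝ gu ⬝ gb ⬝ gu ⬝ gv⁻¹ ⬝ gu ⬝ gv ^ 2 ⬝ gu ⬝ gv ^ 2 ⬝ gj⁻¹ ⬝ gv ⬝ gu ⬝
          gb ⬝ gu⁻¹ ⬝ gv ^ 2 ⬝ gj ^ 4 ⬝ x := by
      rw [gb_gj_inv_gu_gb_gj_inv_gb_gj_inv_gu_gb]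
      simp
    _ = gj⁻¹ ^ 2 ⬝ gu ⬝ gv⁻¹ ⬝ gu ⬝ gb ⬝ gu ⬝ gv⁻¹ ⬝ gu ⬝ gv ^ 2 ⬝ gu ⬝ gv ^ 2 ⬝ gb ⬝ gj ⬝ gu ⬝ gb ⬝
          gv ^ 2 ⬝ gj ^ 4 ⬝ x := by rw [gb_gj_gu_gb]
    _ = gj⁻¹ ^ 2 ⬝ gu ⬝ gb ⬝ gj⁻¹ ^ 2 ⬝ gu ⬝ gb ⬝ gj ^ 3 ⬝ gu⁻¹ ⬝ gb ⬝ gv ⬝ gj ^ 3 ⬝ gu ⬝ gb ⬝ gv ⬝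
          gj ^ 4 ⬝ x := by
      rw [gb_gj_inv_sq_gu_gb_gj_pow_three_gu_inv_gb]
      simp
    _ = gj⁻¹ ^ 2 ⬝ gu ⬝ gb ⬝ gj⁻¹ ^ 2 ⬝ gu ⬝ gb ⬝ gu⁻¹ ⬝ gv ⬝ gu⁻¹ ⬝ gj ^ 3 ⬝ gb ⬝ gj⁻¹ ⬝ gu ⬝ gb ⬝
          gj⁻¹ ⬝ gb ⬝ gj ^ 3 ⬝ x := by
      rw [gb_gj_inv_gu_gb_gj_inv_gb]
      simp
    _ = _ := by
      rw [← a1_inv_mul_a2_mul_a1_mul_a2_sq_inv_mul]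
      simp only [smul_eq_mul, mul_assoc]

end Words

/-- the identities `j⁴a₁j⁻⁴ = a₃a₂⁻³a₃³a₁`, `j⁴a₂j⁻⁴ = a₃⁻¹` and
`j⁴a₃j⁻⁴ = a₁⁻¹a₂⁻¹a₁a₂²a₁⁻¹a₂⁻¹a₁a₃⁻¹a₁⁻¹a₂a₁` hold in `G`. -/
theorem stmt_8 :
    gj ^ 4 * a1 * (gj ^ 4)⁻¹ = a3 * a2 ^ (-3 : ℤ) * a3 ^ 3 * a1 ∧
    gj ^ 4 * a2 * (gj ^ 4)⁻¹ = a3⁻¹ ∧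
    gj ^ 4 * a3 * (gj ^ 4)⁻¹ =
      a1⁻¹ * a2⁻¹ * a1 * a2 ^ 2 * a1⁻¹ * a2⁻¹ * a1 * a3⁻¹ * a1⁻¹ * a2 * a1 := by
  have h₁ := conj_a2_pow_three_mul_a2_pow_three_mul_conj_a2_mul_a1
  have h₂ := conj_a2_eq_a3_inv
  have h₃ := conj_a2_mul_mul_conj_a2
  refine ⟨?_, h₂, ?_⟩
  · rw [← conj_pow, h₂] at h₁
    calc gj ^ 4 * a1 * (gj ^ 4)⁻¹
        = (gj ^ 4 * a2 * (gj ^ 4)⁻¹)⁻¹ * (gj ^ 4 * (a2 * a1) * (gj ^ 4)⁻¹) := by group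
      _ = a3 * a2 ^ (-3 : ℤ) * a3 ^ 3 *
            (a3⁻¹ ^ 3 * a2 ^ 3 * (gj ^ 4 * (a2 * a1) * (gj ^ 4)⁻¹)) := by rw [h₂]; group
      _ = a3 * a2 ^ (-3 : ℤ) * a3 ^ 3 * a1 := by rw [h₁]
  · rw [h₂] at h₃
    calc gj ^ 4 * a3 * (gj ^ 4)⁻¹
        = (gj ^ 8 * a2 * (gj ^ 8)⁻¹)⁻¹ := by rw [← inv_inv a3, ← h₂]; group
      _ = ((a3⁻¹ * (a1⁻¹ * a2 * a1))⁻¹ * (a1⁻¹ * a2 * a1 * (a2 ^ 2)⁻¹ * (a1⁻¹ * a2 * a1)))⁻¹ := by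
        rw [← h₃, inv_mul_cancel_left]
      _ = _ := by group
end

section
/- For every π ∈ Π, writing f(π) = (m, n), one has f(j⁴πj⁻⁴) = (n, −m−n); equivalently, conjugation by j⁴ induces on Π/[Π,Π] ≅ ℤ² the automorphism given by right multiplication by the matrix with rows (0, −1) and (1, −1). -/
/-!
The element `j` is central in `⟨u, v⟩`, and `j³ = (v²u)³` is a product of three conjugates of the
involution `v²`, which forces `j¹² = 1`. Write `σ` for conjugation by `j⁴`, so that `σ³ = 1`.
Conjugation by `(uv⁻¹uj⁵)⁻¹`, which commutes with `σ`, turns `a₁` and `a₂` into `A = ub⁻¹uj⁻⁵` and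
`C = v⁻¹ubj⁻¹`, and turns `a₃` into `σ(C)⁻¹`.

The image of each generator under `σ` is then a word in the generators:
* `σ(a₂) = a₃⁻¹`;
* `σ(C)³C³σ(C) = Aσ(A)⁻¹`, which follows from a short form of `C³`, gives `σ(a₁)`;
* `Aj⁴` and `CAj⁻⁴` are conjugate to `(buj)⁻¹` and `buj`, and `(buj)³ = 1`. For `x = A` and for
  `x = CA` these say that the product of the three conjugates of `x` under `⟨σ⟩`, in a suitable
  order, is trivial. Together they express `σ²(C)`, hence `σ(a₃)`.

Abelianising these three formulas gives the matrix.
-/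

namespace CartwrightSteger

section Group

variable {G : Type*} [Group G]

theorem pow_four_eq_one_of_involutions {x y z c : G} (hx : x ^ 2 = 1) (hy : y ^ 2 = 1)
    (hz : z ^ 2 = 1) (hxyz : x * y * z = c) (hcx : Commute c x) (hcy : Commute c y) :
    c ^ 4 = 1 := by
  have inv_eq {w : G} (hw : w ^ 2 = 1) : w⁻¹ = w := inv_eq_of_mul_eq_one_left (by rwa [← sq])
  have hxy : x * y = c * z := by rw [← hxyz, mul_assoc _ z, ← sq, hz, mul_one]
  have hcz : Commute c z := by
    rw [eq_inv_mul_of_mul_eq hxy.symm]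
    exact (Commute.refl c).inv_right.mul_right (hcx.mul_right hcy)
  have hsq : (x * y) ^ 2 = c ^ 2 := by rw [hxy, hcz.mul_pow, hz, mul_one]
  have hconj : x * (x * y) * x⁻¹ = (x * y)⁻¹ := by
    rw [mul_inv_rev, inv_eq hx, inv_eq hy, ← mul_assoc, ← sq, hx, one_mul]
  have hinv : c ^ 2 = (c ^ 2)⁻¹ := calc
    c ^ 2 = x * c ^ 2 * x⁻¹ := by rw [(hcx.pow_left 2).symm.eq, mul_inv_cancel_right]
    _ = (x * (x * y) * x⁻¹) ^ 2 := by rw [conj_pow, hsq]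
    _ = (c ^ 2)⁻¹ := by rw [hconj, inv_pow, hsq]
  calc c ^ 4 = c ^ 2 * c ^ 2 := pow_add c 2 2
    _ = 1 := by nth_rw 1 [hinv]; exact inv_mul_cancel _

theorem conj_conj_of_pow_three_eq_one {s a c : G} (hs : s ^ 3 = 1) (has : (a * s) ^ 3 = 1)
    (hcas : (c * a * s⁻¹) ^ 3 = 1) :
    MulAut.conj s (MulAut.conj s c) = a⁻¹ * c⁻¹ * (MulAut.conj s a)⁻¹ * (MulAut.conj s c)⁻¹ * a *
      MulAut.conj s a := by
  have ha : a * MulAut.conj s a * MulAut.conj s (MulAut.conj s a) = 1 := calc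
    _ = (a * s) ^ 3 * (s ^ 3)⁻¹ := by simp [pow_succ, mul_assoc]
    _ = 1 := by rw [has, hs, inv_one, mul_one]
  have hca : c * a * MulAut.conj s (MulAut.conj s (c * a)) * MulAut.conj s (c * a) = 1 := calc
    _ = c * a * s⁻¹ * s ^ 3 * (c * a * s⁻¹) ^ 2 := by simp [pow_succ, mul_assoc]
    _ = 1 := by rw [hs, mul_one, ← pow_succ', hcas]
  calc
    MulAut.conj s (MulAut.conj s c)
        = MulAut.conj s (MulAut.conj s (c * a)) * (MulAut.conj s (MulAut.conj s a))⁻¹ := by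
      rw [map_mul, map_mul, mul_inv_cancel_right]
    _ = (c * a)⁻¹ * (MulAut.conj s (c * a))⁻¹ * (a * MulAut.conj s a) := by
      rw [← inv_eq_of_mul_eq_one_right ha, inv_inv,
        eq_inv_mul_of_mul_eq (eq_inv_of_mul_eq_one_left hca)]
    _ = a⁻¹ * c⁻¹ * (MulAut.conj s a)⁻¹ * (MulAut.conj s c)⁻¹ * a * MulAut.conj s a := by
      simp only [map_mul, mul_inv_rev, mul_assoc]

/-- The rewriting rules of a commuting pair which, together with `mul_assoc`, move `a` and `a⁻¹` to
the left of `b` and `b⁻¹` in a word; a bundle of equations so that `simp` can use it as one rule. -/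
abbrev MovesLeft (a b : G) : Prop :=
  (b * a = a * b ∧ ∀ x, b * (a * x) = a * (b * x)) ∧
    (b * a⁻¹ = a⁻¹ * b ∧ ∀ x, b * (a⁻¹ * x) = a⁻¹ * (b * x)) ∧
    (b⁻¹ * a = a * b⁻¹ ∧ ∀ x, b⁻¹ * (a * x) = a * (b⁻¹ * x)) ∧
    (b⁻¹ * a⁻¹ = a⁻¹ * b⁻¹ ∧ ∀ x, b⁻¹ * (a⁻¹ * x) = a⁻¹ * (b⁻¹ * x))

theorem movesLeft_of_commute {a b : G} (h : Commute b a) : MovesLeft a b :=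
  ⟨⟨h.eq, h.left_comm⟩, ⟨h.inv_right.eq, h.inv_right.left_comm⟩,
    ⟨h.inv_left.eq, h.inv_left.left_comm⟩, ⟨h.inv_inv.eq, h.inv_inv.left_comm⟩⟩

end Group

theorem gu_pow_three : gu ^ 3 = 1 :=
  PresentedGroup.one_of_mem (rels := csRels) (x := .of .u ^ 3) (by simp [csRels])

theorem gv_pow_four : gv ^ 4 = 1 :=
  PresentedGroup.one_of_mem (rels := csRels) (x := .of .v ^ 4) (by simp [csRels])

theorem gb_pow_three : gb ^ 3 = 1 :=
  PresentedGroup.one_of_mem (rels := csRels) (x := .of .b ^ 3) (by simp [csRels])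

theorem gv_mul_gu_sq : (gv * gu) ^ 2 = gj :=
  (mul_inv_eq_one.1 (PresentedGroup.one_of_mem (rels := csRels)
    (x := (.of .u * .of .v) ^ 2 * ((.of .v * .of .u) ^ 2)⁻¹) (by simp [csRels]))).symm

theorem commute_gv_gb : Commute gv gb :=
  mul_inv_eq_one.1 (PresentedGroup.one_of_mem (rels := csRels)
    (x := .of .v * .of .b * (.of .b * .of .v)⁻¹) (by simp [csRels]))

theorem gb_mul_gu_mul_gv_pow_three : (gb * gu * gv) ^ 3 = 1 :=
  PresentedGroup.one_of_mem (rels := csRels) (x := (.of .b * .of .u * .of .v) ^ 3)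
    (by simp [csRels])

theorem gb_mul_gu_mul_gv_mul_gu_sq_mul_gv : (gb * gu * gv * gu) ^ 2 * gv = 1 :=
  PresentedGroup.one_of_mem (rels := csRels) (x := (.of .b * .of .u * .of .v * .of .u) ^ 2 * .of .v)
    (by simp [csRels])

theorem gu_mul_gv_mul_gu : gu * gv * gu = gv⁻¹ * gj := by
  rw [← gv_mul_gu_sq, sq, eq_inv_mul_iff_mul_eq]
  simp only [mul_assoc]

theorem gv_mul_gu_mul_gv : gv * gu * gv = gu⁻¹ * gj := by
  rw [gj, sq, eq_inv_mul_iff_mul_eq]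
  simp only [mul_assoc]

theorem commute_gj_gu : Commute gj gu := by
  rw [Commute, SemiconjBy]
  nth_rw 1 [gj]
  rw [← gv_mul_gu_sq, sq, sq]
  simp only [mul_assoc]

theorem commute_gj_gv : Commute gj gv := by
  rw [Commute, SemiconjBy]
  nth_rw 2 [gj]
  rw [← gv_mul_gu_sq, sq, sq]
  simp only [mul_assoc]

theorem gu_inv : gu⁻¹ = gu * gu :=
  inv_eq_of_mul_eq_one_left (by rw [← gu_pow_three, pow_three'])

theorem gv_sq_mul_gu_pow_three : (gv ^ 2 * gu) ^ 3 = gj ^ 3 := by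
  have hconj : gv ^ 2 * gu = gv * gu⁻¹ * gv⁻¹ * gj := by
    rw [sq, mul_assoc, mul_assoc, mul_assoc, ← gu_mul_gv_mul_gu, mul_assoc, inv_mul_cancel_left]
  have hcomm : Commute (gv * gu⁻¹ * gv⁻¹) gj :=
    ((commute_gj_gv.mul_right commute_gj_gu.inv_right).mul_right commute_gj_gv.inv_right).symm
  rw [hconj, hcomm.mul_pow, conj_pow, inv_pow, gu_pow_three, inv_one, mul_one, mul_inv_cancel,
    one_mul]

theorem gj_pow_twelve : gj ^ 12 = 1 := by
  have hv : (gv ^ 2) ^ 2 = 1 := by rw [← pow_mul, gv_pow_four]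
  have hconj (g : CS) : (g * gv ^ 2 * g⁻¹) ^ 2 = 1 := by
    rw [conj_pow, hv, mul_one, mul_inv_cancel]
  have hprod : gv ^ 2 * (gu * gv ^ 2 * gu⁻¹) * (gu⁻¹ * gv ^ 2 * gu⁻¹⁻¹) = gj ^ 3 := by
    rw [← gv_sq_mul_gu_pow_three]
    nth_rw 2 [gu_inv]
    simp [pow_succ, mul_assoc]
  have hj : Commute (gj ^ 3) (gv ^ 2) := commute_gj_gv.pow_pow 3 2
  have hju : Commute (gj ^ 3) gu := commute_gj_gu.pow_left 3
  calc gj ^ 12 = (gj ^ 3) ^ 4 := pow_mul gj 3 4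
    _ = 1 := pow_four_eq_one_of_involutions hv (hconj gu) (hconj gu⁻¹) hprod hj
        ((hju.mul_right hj).mul_right hju.inv_right)

theorem movesLeft_gu_gj : MovesLeft gu gj := movesLeft_of_commute commute_gj_gu

theorem movesLeft_gv_gj : MovesLeft gv gj := movesLeft_of_commute commute_gj_gv

theorem movesLeft_gv_gb : MovesLeft gv gb := movesLeft_of_commute commute_gv_gb.symm

-- With these rules `simp` proves an equation of words up to cancellation and the commutation of `j`
-- with `u`, `v` and of `v` with `b`, so that each step below invokes only the other relations.
attribute [local simp] mul_assoc movesLeft_gu_gj movesLeft_gv_gj movesLeft_gv_gb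

theorem gj_pow_four_inv : (gj ^ 4)⁻¹ = gj ^ 8 :=
  inv_eq_of_mul_eq_one_left (by rw [← pow_add, gj_pow_twelve])

theorem gu_inv_mul_gv_inv : gu⁻¹ * gv⁻¹ = gv * gu * gj⁻¹ := by
  rw [eq_mul_inv_iff_mul_eq, mul_assoc, ← gu_mul_gv_mul_gu]
  simp

theorem gv_inv_mul_gu_inv : gv⁻¹ * gu⁻¹ = gu * gv * gj⁻¹ := by
  rw [eq_mul_inv_iff_mul_eq, mul_assoc, ← gv_mul_gu_mul_gv]
  simp

theorem gu_mul_gv : gu * gv = gv⁻¹ * gu⁻¹ * gj := by rw [gv_inv_mul_gu_inv]; simp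

theorem gv_mul_gu : gv * gu = gu⁻¹ * gv⁻¹ * gj := by rw [gu_inv_mul_gv_inv]; simp

theorem gv_mul_gv : gv * gv = gv⁻¹ * gv⁻¹ := by
  rw [← mul_inv_rev]
  exact eq_inv_of_mul_eq_one_left (by simpa [pow_succ] using gv_pow_four)

theorem gv_inv_mul_gu_inv_mul_gv_inv : gv⁻¹ * gu⁻¹ * gv⁻¹ = gu * gj⁻¹ := by
  simpa using congrArg (·⁻¹) gv_mul_gu_mul_gv

theorem gu_inv_mul_gv_mul_gu_inv : gu⁻¹ * gv * gu⁻¹ = gu * gv⁻¹ * gu * gj := by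
  have h : gu * gv⁻¹ * gu * gj * (gu * gv⁻¹ * gu) = 1 := calc
    _ = gu * (gv⁻¹ * gu⁻¹ * gv⁻¹) * gu * gj := by simp [gu_inv]
    _ = 1 := by
      rw [gv_inv_mul_gu_inv_mul_gv_inv, ← gu_pow_three]
      simp [pow_succ]
  rw [eq_inv_of_mul_eq_one_left h]
  simp

theorem gv_mul_gu_mul_gv_inv_mul_gu :
    gv * (gu * gv⁻¹ * gu) = gu * gv⁻¹ * gu * gv⁻¹ * gj ^ 3 := calc
  gv * (gu * gv⁻¹ * gu) = gv * gu * gv⁻¹ * gu := by simp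
  _ = gu⁻¹ * (gv⁻¹ * gv⁻¹) * gu * gj := by rw [gv_mul_gu]; simp
  _ = gu⁻¹ * gv * (gv * gu) * gj := by rw [← gv_mul_gv]; simp
  _ = gu⁻¹ * gv * gu⁻¹ * gv⁻¹ * gj ^ 2 := by rw [gv_mul_gu]; simp [pow_succ]
  _ = gu * gv⁻¹ * gu * gv⁻¹ * gj ^ 3 := by rw [gu_inv_mul_gv_mul_gu_inv]; simp [pow_succ]

theorem gv_sq_mul_gu_mul_gv_inv_mul_gu :
    gv ^ 2 * (gu * gv⁻¹ * gu) = gu * gv⁻¹ * gu * gv ^ 2 * gj ^ 6 := calc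
  gv ^ 2 * (gu * gv⁻¹ * gu) = gv * (gu * gv⁻¹ * gu) * gv⁻¹ * gj ^ 3 := by
    rw [sq, mul_assoc]
    nth_rw 1 [gv_mul_gu_mul_gv_inv_mul_gu]
    simp [pow_succ]
  _ = gu * gv⁻¹ * gu * (gv⁻¹ * gv⁻¹) * gj ^ 6 := by
    rw [gv_mul_gu_mul_gv_inv_mul_gu]; simp [pow_succ]
  _ = gu * gv⁻¹ * gu * gv ^ 2 * gj ^ 6 := by rw [← gv_mul_gv, sq]

theorem gu_inv_mul_gv_inv_mul_gu_mul_gv_inv :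
    gu⁻¹ * gv⁻¹ * gu * gv⁻¹ = gv ^ 2 * gu * (gj ^ 2)⁻¹ := calc
  gu⁻¹ * gv⁻¹ * gu * gv⁻¹ = gv * (gu * gu) * gv⁻¹ * gj⁻¹ := by
    rw [gu_inv_mul_gv_inv]; simp
  _ = gv * (gu⁻¹ * gv⁻¹) * gj⁻¹ := by rw [← gu_inv]; simp
  _ = gv ^ 2 * gu * (gj ^ 2)⁻¹ := by rw [gu_inv_mul_gv_inv]; simp [pow_succ]

theorem gv_inv_mul_gu_mul_gv_sq_mul_gu_inv_mul_gv :
    gv⁻¹ * gu * gv ^ 2 * gu⁻¹ * gv = gu * gv⁻¹ * gu * gv⁻¹ * gj ^ 8 := calc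
  gv⁻¹ * gu * gv ^ 2 * gu⁻¹ * gv = gv⁻¹ * (gu * gv) * gv * gu⁻¹ * gv := by simp [pow_succ]
  _ = gv⁻¹ * gv⁻¹ * gu⁻¹ * gv * gu⁻¹ * gv * gj := by rw [gu_mul_gv]; simp
  _ = gv * gv * (gu⁻¹ * gv * gu⁻¹) * gv * gj := by rw [← gv_mul_gv]; simp
  _ = gv * (gv * (gu * gv⁻¹ * gu)) * gv * gj ^ 2 := by
    rw [gu_inv_mul_gv_mul_gu_inv]; simp [pow_succ]
  _ = gv * (gu * gv⁻¹ * gu) * gj ^ 5 := by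
    nth_rw 1 [gv_mul_gu_mul_gv_inv_mul_gu]
    simp [pow_succ]
  _ = gu * gv⁻¹ * gu * gv⁻¹ * gj ^ 8 := by
    rw [gv_mul_gu_mul_gv_inv_mul_gu]; simp [pow_succ]

theorem gu_mul_gv_inv_mul_gu_mul_gv_inv_mul_gu :
    gu * gv⁻¹ * gu * gv⁻¹ * gu = gv ^ 2 * gu * gv ^ 2 * (gj ^ 5)⁻¹ := calc
  gu * gv⁻¹ * gu * gv⁻¹ * gu = gv * (gu * gv⁻¹ * gu) * gu * (gj ^ 3)⁻¹ := by
    rw [gv_mul_gu_mul_gv_inv_mul_gu]; simp [pow_succ]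
  _ = gv * gu * (gv⁻¹ * gu⁻¹) * (gj ^ 3)⁻¹ := by rw [gu_inv]; simp
  _ = gv * (gu * gu) * gv * (gj ^ 4)⁻¹ := by rw [gv_inv_mul_gu_inv]; simp [pow_succ]
  _ = gv * (gv * gu * gv) * gv * (gj ^ 5)⁻¹ := by
    rw [gv_mul_gu_mul_gv, gu_inv]; simp [pow_succ]
  _ = gv ^ 2 * gu * gv ^ 2 * (gj ^ 5)⁻¹ := by simp [pow_succ]

theorem gu_inv_mul_gv_mul_gu_inv_mul_gv_mul_gu_inv :
    gu⁻¹ * gv * gu⁻¹ * gv * gu⁻¹ = gv⁻¹ * gu * gv⁻¹ * gj ^ 4 := calc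
  gu⁻¹ * gv * gu⁻¹ * gv * gu⁻¹ = gv⁻¹ * (gv * (gu * gv⁻¹ * gu)) * gv * gu⁻¹ * gj := by
    rw [gu_inv_mul_gv_mul_gu_inv]; simp
  _ = gv⁻¹ * (gu * gv⁻¹ * gu * gv⁻¹) * gv * gu⁻¹ * gj ^ 4 := by
    rw [gv_mul_gu_mul_gv_inv_mul_gu]; simp [pow_succ]
  _ = gv⁻¹ * gu * gv⁻¹ * gj ^ 4 := by simp

theorem gb_mul_gb : gb * gb = gb⁻¹ :=
  eq_inv_of_mul_eq_one_left (by rw [← gb_pow_three, pow_three'])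

theorem gb_mul_gj_mul_gb : gb * gj * gb = gv * gj⁻¹ := by
  have h : gv⁻¹ * (gb * gj * gb * gj) = 1 := by
    have h := gb_mul_gu_mul_gv_mul_gu_sq_mul_gv
    rw [mul_assoc gb, mul_assoc gb, gu_mul_gv_mul_gu] at h
    simpa [sq] using h
  rw [eq_mul_inv_iff_mul_eq, inv_mul_eq_one.1 h]

theorem gj_mul_gb : gj * gb = gv * gb⁻¹ * gj⁻¹ := by
  rw [commute_gv_gb.inv_right.eq, mul_assoc, ← gb_mul_gj_mul_gb]
  simp

theorem gb_mul_gj : gb * gj = gv * gj⁻¹ * gb⁻¹ := by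
  rw [eq_mul_inv_iff_mul_eq, gb_mul_gj_mul_gb]

theorem gv_mul_gb_inv : gv * gb⁻¹ = gj * gb * gj := by rw [gj_mul_gb]; simp

theorem gb_mul_gu_mul_gb : gb * gu * gb = gu * gb * gu := by
  have h : gb * gu * gb * gu⁻¹ * gb⁻¹ * gu⁻¹ = 1 := calc
    gb * gu * gb * gu⁻¹ * gb⁻¹ * gu⁻¹
      = gb * gu * gb * gu⁻¹ * (gv * gb⁻¹ * gj⁻¹) * (gv⁻¹ * gu⁻¹ * gj) := by simp
    _ = gb * gu * gb * (gu⁻¹ * gj) * gb * gu * gv := by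
        rw [← gj_mul_gb, gv_inv_mul_gu_inv]; simp
    _ = (gb * gu * gv) ^ 3 := by rw [← gv_mul_gu_mul_gv]; simp [pow_succ]
    _ = 1 := gb_mul_gu_mul_gv_pow_three
  rwa [mul_inv_eq_one, mul_inv_eq_iff_eq_mul, mul_inv_eq_iff_eq_mul] at h

theorem gb_mul_gu_mul_gb_inv : gb * gu * gb⁻¹ = gu⁻¹ * gb * gu := by
  rw [mul_inv_eq_iff_eq_mul, mul_assoc gu⁻¹, mul_assoc gu⁻¹, gb_mul_gu_mul_gb]
  simp

theorem gb_inv_mul_gu_mul_gb : gb⁻¹ * gu * gb = gu * gb * gu⁻¹ := by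
  rw [eq_mul_inv_iff_mul_eq]
  simp only [mul_assoc, inv_mul_eq_iff_eq_mul]
  simpa using gb_mul_gu_mul_gb.symm

theorem gb_mul_gu_mul_gj_mul_gb : gb * (gu * gj) * gb = gu⁻¹ * gv⁻¹ * gb * gu⁻¹ := calc
  gb * (gu * gj) * gb = gb * gu * gb⁻¹ * (gv * gj⁻¹) := by
    rw [mul_assoc, mul_assoc gu, gj_mul_gb]; simp
  _ = gu⁻¹ * gb * (gu * gv * gj⁻¹) := by rw [gb_mul_gu_mul_gb_inv]; simp
  _ = gu⁻¹ * gv⁻¹ * gb * gu⁻¹ := by rw [← gv_inv_mul_gu_inv]; simp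

theorem gb_mul_gu_inv_mul_gb : gb * gu⁻¹ * gb = gu⁻¹ * gb⁻¹ * gu * gb⁻¹ := by
  have h : gb * gu⁻¹ = gu⁻¹ * (gb⁻¹ * gu * gb) := by rw [gb_inv_mul_gu_mul_gb]; simp
  rw [h, ← gb_mul_gb]; simp

theorem gb_inv_mul_gu_inv_mul_gb : gb⁻¹ * gu⁻¹ * gb = gu * gb⁻¹ * gu⁻¹ := by
  simpa using congrArg (·⁻¹) gb_inv_mul_gu_mul_gb

theorem gb_mul_gj_inv_mul_gb : gb * gj⁻¹ * gb = gv⁻¹ * gb⁻¹ * gj * gb⁻¹ := by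
  have h : gj⁻¹ = gv⁻¹ * (gb * gj * gb) := by rw [gb_mul_gj_mul_gb]; simp
  rw [h]
  simp [← gb_mul_gb]

theorem gb_mul_gu_mul_gj_pow_three : (gb * gu * gj) ^ 3 = 1 := calc
  (gb * gu * gj) ^ 3 = gb * (gu * gj) * gb * (gu * gj) * gb * (gu * gj) := by simp [pow_succ]
  _ = gu⁻¹ * gv⁻¹ * (gb * gj * gb) * gu * gj := by rw [gb_mul_gu_mul_gj_mul_gb]; simp
  _ = 1 := by rw [gb_mul_gj_mul_gb]; simp

/-- The conjugate of `a1` by `conjugator⁻¹`, a shorter word without `v`. -/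
def reducedA1 : CS := gu * gb⁻¹ * gu * (gj ^ 5)⁻¹

/-- The conjugate of `a2` by `conjugator⁻¹`; its conjugate by `j⁴` is that of `a3⁻¹`. -/
def reducedA2 : CS := gv⁻¹ * gu * gb * gj⁻¹

/-- An element commuting with `j` that conjugates `reducedA1`, `reducedA2` to `a1`, `a2`, so that
conjugation by `j⁴` can be computed on these shorter words. -/
def conjugator : CS := gu * gv⁻¹ * gu * gj ^ 5

/-- The automorphism `x ↦ j⁴xj⁻⁴` of the whole lattice. -/
def conjJFour : MulAut CS := MulAut.conj (gj ^ 4)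

theorem conjJFour_apply (x : CS) : conjJFour x = gj ^ 4 * x * (gj ^ 4)⁻¹ := rfl

theorem conj_conjugator_reducedA1 : MulAut.conj conjugator reducedA1 = a1 := calc
  conjugator * reducedA1 * conjugator⁻¹
      = gu * gv⁻¹ * (gu * gu) * gj ^ 5 * (gv * gb⁻¹) * gu⁻¹ * (gj ^ 2 * (gj ^ 4 * gj ^ 8)⁻¹) := by
    simp [conjugator, reducedA1, pow_succ]
  _ = gu * (gv⁻¹ * gu⁻¹) * gj ^ 6 * gb * gu⁻¹ * gj ^ 3 := by
    rw [← pow_add, gj_pow_twelve, gv_mul_gb_inv, ← gu_inv]; simp [pow_succ]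
  _ = gu⁻¹ * gv * gj ^ 5 * gb * gu⁻¹ * gj ^ 3 := by
    rw [gv_inv_mul_gu_inv, gu_inv]; simp [pow_succ]
  _ = gu⁻¹ * (gv⁻¹ * gv⁻¹) * gj ^ 5 * gb * (gv⁻¹ * gu⁻¹) * gj ^ 3 := by
    rw [← gv_mul_gv]; simp [pow_succ]
  _ = (gv * gu) * gv⁻¹ * gj ^ 4 * gb * (gu * gv) * gj ^ 2 := by
    rw [gv_mul_gu, gu_mul_gv]; simp [pow_succ]
  _ = a1 := by simp [a1]

theorem conj_conjugator_reducedA2 : MulAut.conj conjugator reducedA2 = a2 := calc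
  conjugator * reducedA2 * conjugator⁻¹
      = gu * gv⁻¹ * gu * gv⁻¹ * gu * gj ^ 5 * gb * (gj ^ 6)⁻¹ * (gu⁻¹ * gv * gu⁻¹) := by
    simp [conjugator, reducedA2, pow_succ]
  _ = gv ^ 2 * gu * gb * (gv ^ 2 * (gu * gv⁻¹ * gu)) * (gj ^ 5)⁻¹ := by
    rw [gu_mul_gv_inv_mul_gu_mul_gv_inv_mul_gu, gu_inv_mul_gv_mul_gu_inv]; simp [pow_succ]
  _ = a2 := by rw [gv_sq_mul_gu_mul_gv_inv_mul_gu]; simp [pow_succ, a2]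

theorem conj_conjugator_conjJFour_reducedA2 :
    MulAut.conj conjugator (conjJFour reducedA2) = a3⁻¹ := by
  rw [← inv_inj, inv_inv, ← map_inv, ← map_inv]
  calc
    conjugator * (gj ^ 4 * reducedA2⁻¹ * (gj ^ 4)⁻¹) * conjugator⁻¹
        = gu * gv⁻¹ * gu * gv⁻¹ * gj ^ 10 * (gv * gb⁻¹) *
          (gu⁻¹ * gv * gu⁻¹ * gv * gu⁻¹) * (gj ^ 9)⁻¹ := by
      simp [conjugator, reducedA2, pow_succ]
    _ = gu * gv⁻¹ * gu * gv⁻¹ * gj ^ 3 * gj ^ 8 * gb * gv⁻¹ * gu * gv⁻¹ * (gj ^ 4)⁻¹ := by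
      rw [gv_mul_gb_inv, gu_inv_mul_gv_mul_gu_inv_mul_gv_mul_gu_inv]; simp [pow_succ]
    _ = gv * gu * gv⁻¹ * gu * gj ^ 8 * gb * gv⁻¹ * gu * gv⁻¹ * gj ^ 8 := by
      rw [← gv_mul_gu_mul_gv_inv_mul_gu, gj_pow_four_inv]; simp
    _ = gu⁻¹ * (gv⁻¹ * gv⁻¹) * gu * gj ^ 9 * gb * gv⁻¹ * gu * gv⁻¹ * gj ^ 8 := by
      rw [gv_mul_gu]; simp [pow_succ]
    _ = a3 := by rw [← gv_mul_gv, ← sq, a3]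

theorem reducedA1_mul_gj_pow_four_pow_three : (reducedA1 * gj ^ 4) ^ 3 = 1 := by
  have hu : gu = gu⁻¹ * gu⁻¹ := by rw [← mul_inv_rev, ← gu_inv, inv_inv]
  have h : reducedA1 * gj ^ 4 = (gu * gb⁻¹) * (gb * gu * gj)⁻¹ * (gu * gb⁻¹)⁻¹ := by
    rw [reducedA1]
    nth_rw 2 [hu]
    simp [pow_succ]
  rw [h, conj_pow, inv_pow, gb_mul_gu_mul_gj_pow_three, inv_one, mul_one, mul_inv_cancel]

theorem reducedA2_mul_reducedA1_mul_gj_pow_four_inv :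
    reducedA2 * reducedA1 * (gj ^ 4)⁻¹ =
      (gv⁻¹ * gu⁻¹ * gv) * (gb * gu * gj) * (gv⁻¹ * gu⁻¹ * gv)⁻¹ := calc
  reducedA2 * reducedA1 * (gj ^ 4)⁻¹
      = gv⁻¹ * gu * gb * (gu * gj⁻¹) * gb⁻¹ * gu * (gj ^ 9)⁻¹ := by
    simp [reducedA1, reducedA2, pow_succ]
  _ = gv⁻¹ * gu * gv⁻¹ * (gb * gu * gb⁻¹)⁻¹ * gv⁻¹ * gu * gj ^ 3 * (gj ^ 12)⁻¹ := by
    rw [← gv_inv_mul_gu_inv_mul_gv_inv]; simp [pow_succ]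
  _ = gv⁻¹ * gu * (gv⁻¹ * gu⁻¹) * gb⁻¹ * (gu * gv⁻¹ * gu) * gj ^ 3 := by
    rw [gb_mul_gu_mul_gb_inv, gj_pow_twelve]; simp
  _ = gv⁻¹ * (gu * gu) * (gv * gj⁻¹ * gb⁻¹) * (gu * gv⁻¹ * gu) * gj ^ 3 := by
    rw [gv_inv_mul_gu_inv]; simp
  _ = gv⁻¹ * gu⁻¹ * gb * (gu * gv⁻¹ * gu * gv⁻¹ * gj ^ 3) * gv * gj := by
    rw [← gu_inv, ← gb_mul_gj]; simp [pow_succ]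
  _ = (gv⁻¹ * gu⁻¹ * gv) * (gb * gu * gj) * (gv⁻¹ * gu⁻¹ * gv)⁻¹ := by
    rw [← gv_mul_gu_mul_gv_inv_mul_gu]; simp

theorem reducedA2_pow_three :
    reducedA2 ^ 3 = gu * gv⁻¹ * gu * gv⁻¹ * gj ^ 8 * (gb * gj⁻¹ * gb) * gu * (gj ^ 2)⁻¹ := by
  have hvuj : gv⁻¹ * gu * gj⁻¹ = gv ^ 2 * gu⁻¹ * gv⁻¹ := by
    rw [sq, gv_mul_gv, mul_assoc, ← gv_inv_mul_gu_inv_mul_gv_inv]; simp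
  calc
    reducedA2 ^ 3 = gv⁻¹ * gu * gb * (gv⁻¹ * gu * gj⁻¹) * gb * gv⁻¹ * gu * gj⁻¹ * gb * gj⁻¹ := by
      simp [reducedA2, pow_succ]
    _ = gv⁻¹ * gu * gv ^ 2 * (gb * gu⁻¹ * gb) * gv⁻¹ * (gv⁻¹ * gu * gj⁻¹) * gb * gj⁻¹ := by
      nth_rw 1 [hvuj]; simp [pow_succ]
    _ = gv⁻¹ * gu * gv ^ 2 * gu⁻¹ * gb⁻¹ * gu * gv * (gb⁻¹ * gu⁻¹ * gb) * gv⁻¹ * gj⁻¹ := by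
      rw [gb_mul_gu_inv_mul_gb, hvuj]; simp [pow_succ]
    _ = gv⁻¹ * gu * gv ^ 2 * gu⁻¹ * gb⁻¹ * (gu * gv * gu) * gb⁻¹ * gu⁻¹ * gv⁻¹ * gj⁻¹ := by
      rw [gb_inv_mul_gu_inv_mul_gb]; simp
    _ = gv⁻¹ * gu * gv ^ 2 * gu⁻¹ * (gv⁻¹ * gb⁻¹ * gj * gb⁻¹) * (gu⁻¹ * gv⁻¹) * gj⁻¹ := by
      rw [gu_mul_gv_mul_gu]; simp
    _ = (gv⁻¹ * gu * gv ^ 2 * gu⁻¹ * gv) * (gb * gj⁻¹ * gb) * gu * (gj ^ 2)⁻¹ := by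
      rw [← gb_mul_gj_inv_mul_gb, gu_inv_mul_gv_inv]; simp [pow_succ]
    _ = _ := by rw [gv_inv_mul_gu_mul_gv_sq_mul_gu_inv_mul_gv]

theorem conjJFour_reducedA2_pow_three_mul_reducedA2_pow_three :
    conjJFour reducedA2 ^ 3 * reducedA2 ^ 3 =
      gu * gv⁻¹ * gb⁻¹ * gu * gv ^ 2 * gu * gb⁻¹ * gu⁻¹ * gv⁻¹ * gu * (gj ^ 2)⁻¹ := by
  have huj : gu * gj⁻¹ = gv⁻¹ * gu⁻¹ * gv⁻¹ := gv_inv_mul_gu_inv_mul_gv_inv.symm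
  calc
    conjJFour reducedA2 ^ 3 * reducedA2 ^ 3
        = gj ^ 4 * reducedA2 ^ 3 * (gj ^ 4)⁻¹ * reducedA2 ^ 3 := by
      rw [← map_pow, conjJFour_apply]
    _ = gu * gv⁻¹ * gu * gv⁻¹ * gj ^ 12 * (gb * gj⁻¹ * gb) * (gu * gu) *
          gv⁻¹ * gu * gv⁻¹ * gj ^ 2 * (gb * gj⁻¹ * gb) * gu * (gj ^ 2)⁻¹ := by
      rw [reducedA2_pow_three]; simp [pow_succ]
    _ = gu * gv⁻¹ * gu * gv⁻¹ * (gb * gj⁻¹ * gb) * (gu⁻¹ * gv⁻¹ * gu * gv⁻¹) *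
          gj ^ 2 * (gb * gj⁻¹ * gb) * gu * (gj ^ 2)⁻¹ := by
      rw [gj_pow_twelve, ← gu_inv]; simp
    _ = gu * gv⁻¹ * gu * gv * gb * gj⁻¹ * (gb * gu * gb) * gj⁻¹ * gb * gu * (gj ^ 2)⁻¹ := by
      rw [gu_inv_mul_gv_inv_mul_gu_mul_gv_inv]; simp [pow_succ]
    _ = gu * gv⁻¹ * gu * gv * gb * (gu * gj⁻¹) * gb * (gu * gj⁻¹) * gb * gu * (gj ^ 2)⁻¹ := by
      rw [gb_mul_gu_mul_gb]; simp
    _ = gu * gv⁻¹ * gu * (gb * gu⁻¹ * gb) * (gv⁻¹ * gv⁻¹) * gu⁻¹ * gb * gv⁻¹ * gu *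
          (gj ^ 2)⁻¹ := by
      rw [huj]; simp
    _ = gu * gv⁻¹ * gb⁻¹ * gu * gv ^ 2 * (gb⁻¹ * gu⁻¹ * gb) * gv⁻¹ * gu * (gj ^ 2)⁻¹ := by
      rw [gb_mul_gu_inv_mul_gb, ← gv_mul_gv]; simp [pow_succ]
    _ = gu * gv⁻¹ * gb⁻¹ * gu * gv ^ 2 * gu * gb⁻¹ * gu⁻¹ * gv⁻¹ * gu * (gj ^ 2)⁻¹ := by
      rw [gb_inv_mul_gu_inv_mul_gb]; simp

theorem conjJFour_reducedA2_pow_three_mul_reducedA2_pow_three_mul :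
    conjJFour reducedA2 ^ 3 * reducedA2 ^ 3 * conjJFour reducedA2 =
      reducedA1 * (conjJFour reducedA1)⁻¹ := by
  have hcube : gu * gv ^ 2 * gu * gv ^ 2 * gu = gv⁻¹ * gv⁻¹ * gj ^ 3 := by
    rw [← gv_sq_mul_gu_pow_three]; simp [pow_succ]
  calc
    conjJFour reducedA2 ^ 3 * reducedA2 ^ 3 * conjJFour reducedA2
        = gu * gv⁻¹ * gb⁻¹ * gu * gv ^ 2 * gu * gb⁻¹ * (gu⁻¹ * gv⁻¹ * gu * gv⁻¹) * gu *
          gj ^ 2 * gb * (gj ^ 5)⁻¹ := by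
      rw [conjJFour_reducedA2_pow_three_mul_reducedA2_pow_three, conjJFour_apply, reducedA2]
      simp [pow_succ]
    _ = gu * gv⁻¹ * gb⁻¹ * gu * gv ^ 2 * gu * gv ^ 2 * (gb⁻¹ * (gu * gu) * gb) *
          (gj ^ 5)⁻¹ := by
      rw [gu_inv_mul_gv_inv_mul_gu_mul_gv_inv]; simp [pow_succ]
    _ = gu * gv⁻¹ * gb⁻¹ * (gu * gv ^ 2 * gu * gv ^ 2 * gu) * gb⁻¹ * gu⁻¹ * (gj ^ 5)⁻¹ := by
      rw [← gu_inv, gb_inv_mul_gu_inv_mul_gb]; simp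
    _ = gu * gb⁻¹ * gj ^ 3 * (gv * gb⁻¹) * gu⁻¹ * (gj ^ 5)⁻¹ := by
      rw [hcube, ← gv_mul_gv]; simp [pow_succ]
    _ = gu * gb⁻¹ * gj ^ 4 * gb * gu⁻¹ * (gj ^ 4)⁻¹ := by
      rw [gv_mul_gb_inv]; simp [pow_succ]
    _ = reducedA1 * (conjJFour reducedA1)⁻¹ := by
      rw [conjJFour_apply]; simp [reducedA1, pow_succ]

theorem conj_conjugator_gj_pow_four : MulAut.conj conjugator (gj ^ 4) = gj ^ 4 := by
  have h : Commute conjugator gj := by simp [Commute, SemiconjBy, conjugator, pow_succ]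
  rw [MulAut.conj_apply, (h.pow_right 4).eq, mul_inv_cancel_right]

theorem conj_conjugator_conjJFour (x : CS) :
    MulAut.conj conjugator (conjJFour x) = conjJFour (MulAut.conj conjugator x) := by
  simp only [conjJFour_apply, map_mul, map_inv, conj_conjugator_gj_pow_four]

theorem a1_mul_gj_pow_four_pow_three : (a1 * gj ^ 4) ^ 3 = 1 := by
  rw [← conj_conjugator_reducedA1, ← conj_conjugator_gj_pow_four, ← map_mul, ← map_pow,
    reducedA1_mul_gj_pow_four_pow_three, map_one]

theorem a2_mul_a1_mul_gj_pow_four_inv_pow_three : (a2 * a1 * (gj ^ 4)⁻¹) ^ 3 = 1 := by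
  rw [← conj_conjugator_reducedA1, ← conj_conjugator_reducedA2, ← conj_conjugator_gj_pow_four,
    ← map_inv, ← map_mul, ← map_mul, ← map_pow,
    reducedA2_mul_reducedA1_mul_gj_pow_four_inv, conj_pow, gb_mul_gu_mul_gj_pow_three, mul_one,
    mul_inv_cancel, map_one]

theorem conjJFour_a2 : conjJFour a2 = a3⁻¹ := by
  rw [← conj_conjugator_reducedA2, ← conj_conjugator_conjJFour, conj_conjugator_conjJFour_reducedA2]

theorem conjJFour_a1 : conjJFour a1 = a3 * (a2 ^ 3)⁻¹ * a3 ^ 3 * a1 := by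
  have h :=
    congrArg (MulAut.conj conjugator) conjJFour_reducedA2_pow_three_mul_reducedA2_pow_three_mul
  simp only [map_mul, map_pow, map_inv, conj_conjugator_conjJFour, conj_conjugator_reducedA1,
    conj_conjugator_reducedA2, conjJFour_a2] at h
  rw [eq_mul_inv_iff_mul_eq, ← eq_inv_mul_iff_mul_eq] at h
  rw [h]
  simp

theorem conjJFour_a3 :
    conjJFour a3 = (conjJFour a1)⁻¹ * a1⁻¹ * a3⁻¹ * conjJFour a1 * a2 * a1 := by
  have hj : (gj ^ 4) ^ 3 = 1 := by rw [← pow_mul, gj_pow_twelve]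
  have h : conjJFour (conjJFour a2) =
      a1⁻¹ * a2⁻¹ * (conjJFour a1)⁻¹ * (conjJFour a2)⁻¹ * a1 * conjJFour a1 :=
    conj_conj_of_pow_three_eq_one hj a1_mul_gj_pow_four_pow_three
      a2_mul_a1_mul_gj_pow_four_inv_pow_three
  rw [conjJFour_a2, map_inv, inv_eq_iff_eq_inv] at h
  rw [h]
  simp

theorem conjJFour_mem_PiGrp {x : CS} (hx : x ∈ PiGrp) : conjJFour x ∈ PiGrp := by
  have h1 : conjJFour a1 ∈ PiGrp := by
    rw [conjJFour_a1]
    exact mul_mem (mul_mem (mul_mem a3_mem (inv_mem (pow_mem a2_mem 3))) (pow_mem a3_mem 3)) a1_mem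
  suffices PiGrp ≤ PiGrp.comap conjJFour.toMonoidHom from this hx
  refine (Subgroup.closure_le _).2 ?_
  rintro _ (rfl | rfl | rfl)
  · exact h1
  · change conjJFour a2 ∈ PiGrp
    rw [conjJFour_a2]
    exact inv_mem a3_mem
  · change conjJFour a3 ∈ PiGrp
    rw [conjJFour_a3]
    exact mul_mem (mul_mem (mul_mem (mul_mem (mul_mem (inv_mem h1) (inv_mem a1_mem))
      (inv_mem a3_mem)) h1) a2_mem) a1_mem

/-- The restriction of `conjJFour` to `Π`. -/
def conjPi : PiGrp →* PiGrp :=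
  (conjJFour.toMonoidHom.comp PiGrp.subtype).codRestrict PiGrp
    fun x => conjJFour_mem_PiGrp x.2

/-- `a₁` as an element of `Π`. -/
def piGen1 : PiGrp := ⟨a1, a1_mem⟩

/-- `a₂` as an element of `Π`. -/
def piGen2 : PiGrp := ⟨a2, a2_mem⟩

/-- `a₃` as an element of `Π`. -/
def piGen3 : PiGrp := ⟨a3, a3_mem⟩

theorem conjPi_piGen1 :
    conjPi piGen1 = piGen3 * (piGen2 ^ 3)⁻¹ * piGen3 ^ 3 * piGen1 :=
  Subtype.ext conjJFour_a1

theorem conjPi_piGen2 : conjPi piGen2 = piGen3⁻¹ := Subtype.ext conjJFour_a2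

theorem conjPi_piGen3 :
    conjPi piGen3 =
      (conjPi piGen1)⁻¹ * piGen1⁻¹ * piGen3⁻¹ * conjPi piGen1 * piGen2 * piGen1 :=
  Subtype.ext conjJFour_a3

theorem monoidHom_PiGrp_ext {M : Type*} [Monoid M] {f g : PiGrp →* M} (h1 : f piGen1 = g piGen1)
    (h2 : f piGen2 = g piGen2) (h3 : f piGen3 = g piGen3) : f = g := by
  refine MonoidHom.eq_of_eqOn_dense Subgroup.closure_closure_coe_preimage ?_
  rintro ⟨_, _⟩ (rfl | rfl | rfl)
  exacts [h1, h2, h3]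

/-- The automorphism `(m, n) ↦ (n, -m - n)` of order three of `ℤ²`, on the multiplicative copy in
which `f` takes its values. -/
def latticeRotation : Multiplicative (ℤ × ℤ) →* Multiplicative (ℤ × ℤ) :=
  AddMonoidHom.toMultiplicative
    ((AddMonoidHom.snd ℤ ℤ).prod (-AddMonoidHom.fst ℤ ℤ - AddMonoidHom.snd ℤ ℤ))

end CartwrightSteger

open CartwrightSteger in
/-- for every `π ∈ Π` with `f(π) = (m, n)` one has
`f(j⁴πj⁻⁴) = (n, −m−n)`, i.e. conjugation by `j⁴` induces on `Π/[Π,Π] ≅ ℤ²`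
right multiplication by the matrix with rows `(0, −1)` and `(1, −1)`. -/
theorem stmt_9 (f : ↥PiGrp →* Multiplicative (ℤ × ℤ))
    (hsurj : Function.Surjective f)
    (hker : f.ker = commutator ↥PiGrp)
    (hf1 : f ⟨a1, a1_mem⟩ = Multiplicative.ofAdd (1, 3))
    (hf2 : f ⟨a2, a2_mem⟩ = Multiplicative.ofAdd (-2, 1))
    (hf3 : f ⟨a3, a3_mem⟩ = Multiplicative.ofAdd (-1, -1)) :
    ∀ π π' : ↥PiGrp, (π' : CS) = gj ^ 4 * (π : CS) * (gj ^ 4)⁻¹ →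
      f π' = Multiplicative.ofAdd
        ((Multiplicative.toAdd (f π)).2,
          -(Multiplicative.toAdd (f π)).1 - (Multiplicative.toAdd (f π)).2) := by
  intro π π' hπ'
  change f piGen1 = _ at hf1
  change f piGen2 = _ at hf2
  change f piGen3 = _ at hf3
  have h1 : f (conjPi piGen1) = Multiplicative.ofAdd (3, -4) := by
    simp only [conjPi_piGen1, map_mul, map_inv, map_pow, hf1, hf2, hf3]
    rfl
  have h : f.comp conjPi = latticeRotation.comp f := by
    apply monoidHom_PiGrp_ext
    · rw [MonoidHom.comp_apply, MonoidHom.comp_apply, h1, hf1]; rfl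
    · rw [MonoidHom.comp_apply, MonoidHom.comp_apply, conjPi_piGen2, map_inv, hf3, hf2]; rfl
    · simp only [MonoidHom.comp_apply, conjPi_piGen3, map_mul, map_inv, h1, hf1, hf2, hf3]; rfl
  have hconj : π' = conjPi π := Subtype.ext hπ'
  rw [hconj]
  exact DFunLike.congr_fun h π
end
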